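/- arXiv:2110.15940 — 2 statements merged into one kernel-verified Lean document; each statement's English description precedes it below -/
import Mathlib

section
/- Let k, N be natural numbers with 1 ≤ k < N and set n := N − k. Define det Φ := Σ_{σ ∈ S_k} sgn(σ) · ω^{1,σ(1)} ∧ ω^{2,σ(2)} ∧ ⋯ ∧ ω^{k,σ(k)} in Λ(V) (the entries ω^{ij} are degree-2 elements and pairwise commute, so the order of the factors is immaterial). Then (det Φ)^{n} = ((∏_{j=N−k}^{N−1} j!)/(∏_{j=0}^{k−1} j!)) · T in Λ(V). -/
noncomputable section

/-- The real vector space with basis `ψ_s^j` (inl) and `ψ̄_s^j` (inr),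
    `1 ≤ s ≤ n`, `1 ≤ j ≤ k`. -/
abbrev V (k n : ℕ) : Type := ((Fin n × Fin k) ⊕ (Fin n × Fin k)) → ℝ

/-- The fermionic variable `ψ_s^j` as a degree-1 element of the exterior algebra. -/
def ψ (k n : ℕ) (s : Fin n) (j : Fin k) : ExteriorAlgebra ℝ (V k n) :=
  ExteriorAlgebra.ι ℝ (Pi.single (Sum.inl (s, j)) (1 : ℝ))

/-- The fermionic variable `ψ̄_s^j` as a degree-1 element of the exterior algebra. -/
def ψb (k n : ℕ) (s : Fin n) (j : Fin k) : ExteriorAlgebra ℝ (V k n) :=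
  ExteriorAlgebra.ι ℝ (Pi.single (Sum.inr (s, j)) (1 : ℝ))

/-- `ω^{ij} = ∑_{s=1}^n ψ_s^i ∧ ψ̄_s^j`. -/
def ω (k n : ℕ) (i j : Fin k) : ExteriorAlgebra ℝ (V k n) :=
  ∑ s : Fin n, ψ k n s i * ψb k n s j

/-- `tr Φ = ∑_{i=1}^k ω^{ii}`. -/
def trPhi (k n : ℕ) : ExteriorAlgebra ℝ (V k n) :=
  ∑ i : Fin k, ω k n i i

/-- `tr(Φ²) = ∑_{i,j=1}^k ω^{ij} ∧ ω^{ji}`. -/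
def trPhi2 (k n : ℕ) : ExteriorAlgebra ℝ (V k n) :=
  ∑ i : Fin k, ∑ j : Fin k, ω k n i j * ω k n j i

/-- The top-degree generator `T = ∧_{s=1}^n (ψ_s^1 ∧ ψ̄_s^1 ∧ ⋯ ∧ ψ_s^k ∧ ψ̄_s^k)`. -/
def T (k n : ℕ) : ExteriorAlgebra ℝ (V k n) :=
  ((List.finRange n).map (fun s =>
    ((List.finRange k).map (fun j => ψ k n s j * ψb k n s j)).prod)).prod

/-- `det Φ = ∑_{σ ∈ S_k} sgn(σ) · ω^{1,σ(1)} ∧ ⋯ ∧ ω^{k,σ(k)}`. -/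
def detPhi (k n : ℕ) : ExteriorAlgebra ℝ (V k n) :=
  ∑ σ : Equiv.Perm (Fin k),
    ((Equiv.Perm.sign σ : ℤ) : ℝ) •
      ((List.finRange k).map (fun i => ω k n i (σ i))).prod

/-!
Write `Φ = ∑ₛ ηₛ`, where `ηₛ = (ψₛⁱ ψ̄ₛʲ)ᵢⱼ` has entries in the commutative ring generated by the
bivectors. A product of two entries of `η = ηₛ` changes sign when their columns are exchanged, so
all terms of its determinant agree: `det η = k! ∏ᵢ ηᵢᵢ` and `det (1 + t η) = 1 / (1 - t tr η)`.
Hence the coefficient of `t ^ k` in `det (A + t η) ^ (s + 1)` is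
`(s + k).choose s * det A ^ s * det η`. If `A` is the sum of `s` of these matrices, all other
coefficients vanish, because a product of more than `k` entries of a single `ηₛ` is zero. Setting
`t = 1` and adding the `ηₛ` one at a time, each step contributes the factor
`(s + 1) (s + 2) ⋯ (s + k)`, and the product of these factors is the asserted ratio of factorials.
-/

open Polynomial

section NilpotentSums

variable {R : Type*}

lemma add_pow_succ_of_mul_self_eq_zero [CommSemiring R] {a : R} (ha : a * a = 0) (b : R) (m : ℕ) :
    (a + b) ^ (m + 1) = b ^ (m + 1) + (m + 1) * (a * b ^ m) := by
  induction m with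
  | zero => simp [add_comm]
  | succ m ih =>
    calc (a + b) ^ (m + 1 + 1)
        = b ^ (m + 1 + 1) + (m + 1 + 1) * (a * b ^ (m + 1)) + (m + 1) * (a * a) * b ^ m := by
          rw [pow_succ, ih]; ring
      _ = b ^ (m + 1 + 1) + ((m + 1 : ℕ) + 1) * (a * b ^ (m + 1)) := by simp [ha]

lemma sum_pow_eq_factorial_mul_esymm [CommSemiring R] {s : Multiset R}
    (hs : ∀ a ∈ s, a * a = 0) (m : ℕ) : s.sum ^ m = m.factorial * s.esymm m := by
  induction s using Multiset.induction generalizing m with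
  | empty => cases m <;> simp [Multiset.esymm, Multiset.powersetCard_zero_right]
  | cons a s ih =>
    have ih := ih fun b hb => hs b (Multiset.mem_cons_of_mem hb)
    cases m with
    | zero => simp [Multiset.esymm]
    | succ m =>
      have esymm_cons : (a ::ₘ s).esymm (m + 1) = s.esymm (m + 1) + a * s.esymm m := by
        simp [Multiset.esymm, Multiset.powersetCard_cons, Multiset.sum_map_mul_left]
      rw [Multiset.sum_cons, add_pow_succ_of_mul_self_eq_zero (hs a (Multiset.mem_cons_self a s)),
        ih, ih, esymm_cons, Nat.factorial_succ]
      push_cast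
      ring

lemma sum_pow_mul_card_succ_eq_zero [CommSemiring R] {ι : Type*} {x : ι → R} {c : ℕ}
    {s : Finset ι} (hx : ∀ i ∈ s, x i ^ (c + 1) = 0) : (∑ i ∈ s, x i) ^ (c * s.card + 1) = 0 := by
  induction s using Finset.cons_induction with
  | empty => simp
  | cons a s ha ih =>
    rw [Finset.sum_cons, Finset.card_cons]
    refine (Commute.all _ _).add_pow_eq_zero_of_add_le_succ_of_pow_eq_zero
      (hx a (Finset.mem_cons_self a s)) (ih fun i hi => hx i (Finset.mem_cons_of_mem hi)) ?_
    linarith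

end NilpotentSums

section DetPencil

variable {R ι : Type*} [CommRing R] [Fintype ι] [DecidableEq ι]

/-- The determinant of the matrix pencil `A + t B`, as a polynomial in `t`. -/
def detPencil (A B : Matrix ι ι R) : R[X] :=
  (A.map C + (X : R[X]) • B.map C).det

lemma map_detPencil {S : Type*} [CommRing S] (f : R →+* S) (A B : Matrix ι ι R) :
    (detPencil A B).map f = detPencil (A.map f) (B.map f) := by
  rw [detPencil, ← coe_mapRingHom, RingHom.map_det, detPencil]
  congr 1
  ext i j : 1
  simp

lemma map_coeff_detPencil_pow {S : Type*} [CommRing S] (f : R →+* S) (A B : Matrix ι ι R)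
    (s m : ℕ) :
    f ((detPencil A B ^ s).coeff m) = (detPencil (A.map f) (B.map f) ^ s).coeff m := by
  rw [← coeff_map, Polynomial.map_pow, map_detPencil]

lemma eval_one_detPencil (A B : Matrix ι ι R) : (detPencil A B).eval 1 = (A + B).det := by
  rw [detPencil, ← coe_evalRingHom, RingHom.map_det]
  congr 1
  ext i j
  simp

lemma detPencil_eq_C_det_mul {A : Matrix ι ι R} (hA : IsUnit A.det) (B : Matrix ι ι R) :
    detPencil A B = C A.det * detPencil 1 (A⁻¹ * B) := by
  have hAB : A.map C + (X : R[X]) • B.map C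
      = A.map C * ((1 : Matrix ι ι R).map C + (X : R[X]) • (A⁻¹ * B).map C) := by
    rw [mul_add, Matrix.mul_smul, ← Matrix.map_mul, ← Matrix.map_mul, mul_one,
      Matrix.mul_nonsing_inv_cancel_left _ _ hA]
  rw [detPencil, hAB, Matrix.det_mul, detPencil, RingHom.map_det]
  rfl

lemma det_mem_ideal_pow_card {I : Ideal R} {A : Matrix ι ι R} (hA : ∀ i j, A i j ∈ I) :
    A.det ∈ I ^ Fintype.card ι := by
  rw [Matrix.det_apply']
  refine Ideal.sum_mem _ fun σ _ => Ideal.mul_mem_left _ _ ?_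
  simpa using Ideal.prod_mem_prod (s := Finset.univ) (I := fun _ => I) fun i _ => hA (σ i) i

lemma detPencil_mem_reesAlgebra {I : Ideal R} (A : Matrix ι ι R) {B : Matrix ι ι R}
    (hB : ∀ i j, B i j ∈ I) : detPencil A B ∈ reesAlgebra I := by
  rw [detPencil, Matrix.det_apply']
  refine sum_mem fun σ _ => mul_mem (intCast_mem _ _) (prod_mem fun i _ => ?_)
  rw [Matrix.add_apply]
  refine add_mem (algebraMap_mem _ (A (σ i) i)) ?_
  rw [Matrix.smul_apply, Matrix.map_apply, smul_eq_mul, X_mul_C, C_mul_X_eq_monomial,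
    reesAlgebra.monomial_mem, pow_one]
  exact hB _ _

lemma X_pow_dvd_detPencil_pow {J : Ideal R} {A : Matrix ι ι R} (hA : ∀ i j, A i j ∈ J)
    (B : Matrix ι ι R) {a b m : ℕ} (hJ : J ^ a = 0) (hab : a + b ≤ Fintype.card ι * m + 1) :
    X ^ b ∣ detPencil A B ^ m := by
  set K : Ideal R[X] := Ideal.span {X} + J.map C
  have hmem : detPencil A B ^ m ∈ K ^ (Fintype.card ι * m) := by
    rw [pow_mul]
    refine Ideal.pow_mem_pow (det_mem_ideal_pow_card fun i j => ?_) m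
    rw [Matrix.add_apply, add_comm]
    exact Submodule.add_mem_sup
      (Ideal.mul_mem_right _ _ (Ideal.mem_span_singleton_self X)) (Ideal.mem_map_of_mem C (hA i j))
  have hdvd : Ideal.span {X} ^ b ∣ K ^ (Fintype.card ι * m) := by
    refine (Commute.all _ _).pow_dvd_add_pow_of_pow_eq_zero_right hab ?_
    rw [← Ideal.map_pow, hJ, Ideal.zero_eq_bot, Ideal.map_bot]
    rfl
  rw [← Ideal.mem_span_singleton, ← Ideal.span_singleton_pow]
  exact Ideal.le_of_dvd hdvd hmem

end DetPencil

/-- A matrix whose entries multiply like the products `ψᵢ ψ̄ⱼ` of two families of anticommuting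
variables, but in a commutative ring: these are the outer products (dyads) of fermionic
calculus, and their `2 × 2` permanents vanish. -/
structure IsFermionicDyad {R m n : Type*} [CommRing R] (η : Matrix m n R) : Prop where
  mul_same_row : ∀ i j q, η i j * η i q = 0
  mul_swap : ∀ i p j q, η i j * η p q = -(η i q * η p j)

/-- The ideal generated by the entries of a matrix. -/
def entryIdeal {R m n : Type*} [CommRing R] (η : Matrix m n R) : Ideal R :=
  Ideal.span (Set.range fun p : m × n => η p.1 p.2)

lemma entry_mem_entryIdeal {R m n : Type*} [CommRing R] (η : Matrix m n R) (i : m) (j : n) :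
    η i j ∈ entryIdeal η :=
  Ideal.subset_span ⟨(i, j), rfl⟩

namespace IsFermionicDyad

section Rectangular

variable {R m n : Type*} [CommRing R] {η : Matrix m n R}

lemma submatrix {m' n' : Type*} (h : IsFermionicDyad η) (f : m' → m) (g : n' → n) :
    IsFermionicDyad (η.submatrix f g) where
  mul_same_row _ _ _ := h.mul_same_row _ _ _
  mul_swap _ _ _ _ := h.mul_swap _ _ _ _

lemma map {S : Type*} [CommRing S] (h : IsFermionicDyad η) (f : R →+* S) :
    IsFermionicDyad (η.map f) where
  mul_same_row i j q := by simp only [Matrix.map_apply, ← map_mul, h.mul_same_row, map_zero]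
  mul_swap i p j q := by simp only [Matrix.map_apply, ← map_mul, ← map_neg, h.mul_swap i p j q]

lemma mul_left {l : Type*} [Fintype m] (h : IsFermionicDyad η) (M : Matrix l m R) :
    IsFermionicDyad (M * η) where
  mul_same_row i j q := by
    simp only [Matrix.mul_apply, Finset.sum_mul_sum, ← Finset.sum_product']
    refine Finset.sum_involution (fun p _ => p.swap) ?_ ?_ (by simp) (by simp)
    · rintro ⟨a, b⟩ -
      rw [Prod.swap_prod_mk]
      linear_combination M i a * M i b * h.mul_swap a b j q
    · rintro ⟨a, b⟩ - hne hab
      obtain rfl : b = a := congrArg Prod.fst hab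
      exact hne (by linear_combination M i b * M i b * h.mul_same_row b j q)
  mul_swap i p j q := by
    simp only [Matrix.mul_apply, Finset.sum_mul_sum, ← Finset.sum_neg_distrib]
    refine Finset.sum_congr rfl fun a _ => Finset.sum_congr rfl fun b _ => ?_
    linear_combination M i a * M p b * h.mul_swap a b j q

lemma entryIdeal_pow_card_succ [Fintype m] (h : IsFermionicDyad η) :
    entryIdeal η ^ (Fintype.card m + 1) = 0 := by
  let rowIdeal (i : m) : Ideal R := Ideal.span (Set.range (η i))
  have rowIdeal_sq (i : m) : rowIdeal i ^ 2 = 0 := by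
    rw [pow_two, Ideal.span_mul_span', Ideal.zero_eq_bot, Ideal.span_eq_bot]
    rintro _ ⟨_, ⟨j, rfl⟩, _, ⟨q, rfl⟩, rfl⟩
    exact h.mul_same_row i j q
  have entryIdeal_le : entryIdeal η ≤ ∑ i, rowIdeal i := by
    rw [entryIdeal, Ideal.span_le, Ideal.sum_eq_sup]
    rintro _ ⟨⟨i, j⟩, rfl⟩
    exact Finset.le_sup (f := rowIdeal) (Finset.mem_univ i) (Ideal.subset_span ⟨j, rfl⟩)
  have sum_pow : (∑ i, rowIdeal i) ^ (1 * Fintype.card m + 1) = 0 :=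
    sum_pow_mul_card_succ_eq_zero fun i _ => rowIdeal_sq i
  rw [one_mul] at sum_pow
  exact le_bot_iff.1 ((Ideal.pow_right_mono entryIdeal_le _).trans sum_pow.le)

end Rectangular

section Square

variable {R ι : Type*} [CommRing R] [Fintype ι] {η : Matrix ι ι R}

lemma trace_pow (h : IsFermionicDyad η) (m : ℕ) :
    η.trace ^ m = m.factorial * ∑ t ∈ Finset.univ.powersetCard m, ∏ i ∈ t, η i i := by
  rw [← Finset.esymm_map_val (fun i => η i i)]
  refine sum_pow_eq_factorial_mul_esymm (fun a ha => ?_) m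
  obtain ⟨i, -, rfl⟩ := Multiset.mem_map.1 ha
  exact h.mul_same_row i i i

variable [DecidableEq ι]

lemma sign_mul_prod (h : IsFermionicDyad η) (σ : Equiv.Perm ι) :
    ((Equiv.Perm.sign σ : ℤ) : R) * ∏ i, η (σ i) i = ∏ i, η i i := by
  induction σ using Equiv.Perm.swap_induction_on' with
  | one => simp
  | mul_swap f x y hxy ih =>
    rw [← ih]
    have split (g : ι → R) : ∏ i, g i = g x * g y * ∏ i ∈ (Finset.univ.erase x).erase y, g i := by
      rw [mul_assoc, Finset.mul_prod_erase _ _ (by simp [hxy.symm]),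
        Finset.mul_prod_erase _ _ (Finset.mem_univ x)]
    have rest : ∏ i ∈ (Finset.univ.erase x).erase y, η ((f * Equiv.swap x y) i) i
        = ∏ i ∈ (Finset.univ.erase x).erase y, η (f i) i := by
      refine Finset.prod_congr rfl fun i hi => ?_
      simp only [Finset.mem_erase] at hi
      rw [Equiv.Perm.mul_apply, Equiv.swap_apply_of_ne_of_ne hi.2.1 hi.1]
    rw [split, split, rest]
    simp only [Equiv.Perm.mul_apply, Equiv.swap_apply_left, Equiv.swap_apply_right,
      Equiv.Perm.sign_mul, Equiv.Perm.sign_swap hxy]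
    push_cast
    linear_combination -((Equiv.Perm.sign f : ℤ) : R) *
      (∏ i ∈ (Finset.univ.erase x).erase y, η (f i) i) * h.mul_swap (f y) (f x) x y

lemma det_eq (h : IsFermionicDyad η) : η.det = (Fintype.card ι).factorial * ∏ i, η i i := by
  simp [Matrix.det_apply', h.sign_mul_prod, Fintype.card_perm]

lemma trace_pow_card (h : IsFermionicDyad η) : η.trace ^ Fintype.card ι = η.det := by
  rw [h.trace_pow, h.det_eq, ← Finset.card_univ, Finset.powersetCard_self, Finset.sum_singleton]

-- That is, `det (1 + t η) = 1 / (1 - t tr η)`; a dyad of commuting variables would have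
-- `det (1 + t η) = 1 + t tr η`.
lemma coeff_detPencil_one (h : IsFermionicDyad η) (m : ℕ) :
    (detPencil 1 η).coeff m = η.trace ^ m := by
  rw [detPencil, Matrix.map_one _ C_0 C_1, Matrix.coeff_det_one_add_X_smul_eq_sum_minors,
    h.trace_pow, Finset.mul_sum]
  refine Finset.sum_congr rfl fun t ht => ?_
  rw [(h.submatrix _ _).det_eq, Fintype.card_coe, (Finset.mem_powersetCard.1 ht).2]
  exact congrArg _ (Finset.prod_coe_sort t fun i => η i i)

lemma coeff_detPencil_one_pow_succ (h : IsFermionicDyad η) (s m : ℕ) :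
    (detPencil 1 η ^ (s + 1)).coeff m = (s + m).choose s * η.trace ^ m := by
  have geometric : (detPencil 1 η : PowerSeries R)
      = PowerSeries.rescale η.trace (PowerSeries.mk 1) := by
    ext m
    simp [h.coeff_detPencil_one]
  rw [← coeff_coe, coe_pow, geometric, ← map_pow, PowerSeries.mk_one_pow_eq_mk_choose_add,
    PowerSeries.coeff_rescale, PowerSeries.coeff_mk, mul_comm]

lemma coeff_card_detPencil_pow_succ_of_isUnit (h : IsFermionicDyad η) {A : Matrix ι ι R}
    (hA : IsUnit A.det) (s : ℕ) :
    (detPencil A η ^ (s + 1)).coeff (Fintype.card ι)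
      = (s + Fintype.card ι).choose s * (A.det ^ s * η.det) := by
  have hdet : A.det * (A⁻¹ * η).det = η.det := by
    rw [← Matrix.det_mul, Matrix.mul_nonsing_inv_cancel_left _ _ hA]
  rw [detPencil_eq_C_det_mul hA, mul_pow, ← C_pow, coeff_C_mul,
    (h.mul_left _).coeff_detPencil_one_pow_succ, (h.mul_left _).trace_pow_card]
  linear_combination ((s + Fintype.card ι).choose s : R) * A.det ^ s * hdet

lemma coeff_card_detPencil_pow_succ_of_mem_nonZeroDivisors (h : IsFermionicDyad η)
    {A : Matrix ι ι R} (hA : A.det ∈ nonZeroDivisors R) (s : ℕ) :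
    (detPencil A η ^ (s + 1)).coeff (Fintype.card ι)
      = (s + Fintype.card ι).choose s * (A.det ^ s * η.det) := by
  let f := algebraMap R (FractionRing R)
  have hfA : IsUnit (A.map f).det := by
    rw [← RingHom.mapMatrix_apply, ← RingHom.map_det]
    exact IsLocalization.map_units (FractionRing R) ⟨A.det, hA⟩
  apply IsFractionRing.injective R (FractionRing R)
  rw [map_coeff_detPencil_pow, (h.map f).coeff_card_detPencil_pow_succ_of_isUnit hfA]
  simp [RingHom.map_det, f]

-- Both sides are polynomials in the entries of `A`, so one may replace `A` by `t + A`, whose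
-- determinant is monic in `t` and hence regular.
lemma coeff_card_detPencil_pow_succ (h : IsFermionicDyad η) (A : Matrix ι ι R) (s : ℕ) :
    (detPencil A η ^ (s + 1)).coeff (Fintype.card ι)
      = (s + Fintype.card ι).choose s * (A.det ^ s * η.det) := by
  let Y : Matrix ι ι R[X] := (X : R[X]) • 1 + A.map C
  have hY : Y.det.Monic := leadingCoeff_det_X_one_add_C A
  have generic := congrArg (evalRingHom 0)
    ((h.map C).coeff_card_detPencil_pow_succ_of_mem_nonZeroDivisors hY.mem_nonZeroDivisors s)
  have hY0 : Y.map (evalRingHom 0) = A := by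
    ext i j
    simp [Y]
  have hη0 : (η.map C).map (evalRingHom 0) = η := by
    ext i j
    simp
  simpa only [map_coeff_detPencil_pow, map_mul, map_natCast, map_pow, RingHom.map_det,
    RingHom.mapMatrix_apply, hY0, hη0] using generic

-- The coefficient of `t ^ j` in `det (A + t η) ^ (s + 1)` has degree `card ι * (s + 1) - j` in `A`
-- and `j` in `η`, so nilpotency leaves only `j = card ι`.
lemma det_add_pow_succ (h : IsFermionicDyad η) {A : Matrix ι ι R} {J : Ideal R}
    (hA : ∀ i j, A i j ∈ J) (s : ℕ) (hJ : J ^ (Fintype.card ι * s + 1) = 0) :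
    (A + η).det ^ (s + 1) = (s + Fintype.card ι).choose s * (A.det ^ s * η.det) := by
  have coeff_of_lt (j : ℕ) (hj : j < Fintype.card ι) : (detPencil A η ^ (s + 1)).coeff j = 0 :=
    X_pow_dvd_iff.1 (X_pow_dvd_detPencil_pow hA η hJ (by linarith)) j hj
  have coeff_of_gt (j : ℕ) (hj : Fintype.card ι < j) : (detPencil A η ^ (s + 1)).coeff j = 0 := by
    have hmem := (mem_reesAlgebra_iff _ _).1
      (pow_mem (detPencil_mem_reesAlgebra A (entry_mem_entryIdeal η)) (s + 1)) j
    rwa [pow_eq_zero_of_le hj h.entryIdeal_pow_card_succ] at hmem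
  have eq_monomial : detPencil A η ^ (s + 1) = monomial (Fintype.card ι)
      ((s + Fintype.card ι).choose s * (A.det ^ s * η.det)) := by
    ext j
    rw [coeff_monomial]
    split_ifs with hj
    · rw [← hj, h.coeff_card_detPencil_pow_succ]
    · exact (lt_or_gt_of_ne hj).elim (coeff_of_gt j) (coeff_of_lt j)
  rw [← eval_one_detPencil, ← eval_pow, eq_monomial, eval_monomial, one_pow, mul_one]

theorem det_sum_pow_card {κ : Type*} {η : κ → Matrix ι ι R} {s : Finset κ}
    (h : ∀ a ∈ s, IsFermionicDyad (η a)) :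
    (∑ a ∈ s, η a).det ^ s.card
      = (∏ r ∈ Finset.range s.card, (r + 1).ascFactorial (Fintype.card ι) : ℕ)
        * ∏ a ∈ s, ∏ i, η a i i := by
  induction s using Finset.cons_induction with
  | empty => simp
  | cons b s hb ih =>
    have hs : ∀ a ∈ s, IsFermionicDyad (η a) := fun a ha => h a (Finset.mem_cons_of_mem ha)
    have hη := h b (Finset.mem_cons_self b s)
    have hmem (i j : ι) : (∑ a ∈ s, η a) i j ∈ ∑ a ∈ s, entryIdeal (η a) := by
      rw [Matrix.sum_apply, Ideal.sum_eq_sup]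
      exact Ideal.sum_mem _ fun a ha =>
        Finset.le_sup (f := fun a => entryIdeal (η a)) ha (entry_mem_entryIdeal _ _ _)
    have hnil : (∑ a ∈ s, entryIdeal (η a)) ^ (Fintype.card ι * s.card + 1) = 0 :=
      sum_pow_mul_card_succ_eq_zero fun a ha => (hs a ha).entryIdeal_pow_card_succ
    rw [Finset.sum_cons, add_comm, Finset.card_cons, hη.det_add_pow_succ hmem _ hnil, ih hs,
      hη.det_eq, Finset.prod_range_succ, Finset.prod_cons, Nat.ascFactorial_eq_factorial_mul_choose,
      ← Nat.choose_symm_add]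
    push_cast
    ring

end Square

end IsFermionicDyad

lemma prod_ascFactorial_mul_prod_factorial (n k : ℕ) :
    (∏ r ∈ Finset.range n, (r + 1).ascFactorial k) * ∏ j ∈ Finset.range k, j.factorial
      = ∏ j ∈ Finset.Ico n (n + k), j.factorial := by
  refine Nat.eq_of_mul_eq_mul_left (Finset.prod_pos fun j (_ : j ∈ Finset.range n) =>
    j.factorial_pos) ?_
  calc (∏ j ∈ Finset.range n, j.factorial) * ((∏ r ∈ Finset.range n, (r + 1).ascFactorial k)
        * ∏ j ∈ Finset.range k, j.factorial)
      = (∏ j ∈ Finset.range k, j.factorial) * ∏ r ∈ Finset.range n, (k + r).factorial := by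
        simp only [← mul_assoc, ← Finset.prod_mul_distrib, Nat.factorial_mul_ascFactorial]
        simp only [mul_comm, add_comm]
    _ = ∏ j ∈ Finset.range (n + k), j.factorial := by rw [add_comm n k, Finset.prod_range_add]
    _ = _ := (Finset.prod_range_mul_prod_Ico _ (Nat.le_add_right n k)).symm

section Bivectors

open ExteriorAlgebra

variable {R M : Type*} [CommRing R] [AddCommGroup M] [Module R M]

lemma ι_mul_ι_eq_neg (x y : M) : ι R x * ι R y = -(ι R y * ι R x) :=
  eq_neg_of_add_eq_zero_left (ι_add_mul_swap x y)

lemma commute_ι_mul_ι_ι (x y z : M) : Commute (ι R x * ι R y) (ι R z) :=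
  calc ι R x * ι R y * ι R z = ι R x * -(ι R z * ι R y) := by rw [mul_assoc, ι_mul_ι_eq_neg y z]
    _ = -(ι R x * ι R z) * ι R y := by simp only [mul_neg, neg_mul, mul_assoc]
    _ = ι R z * (ι R x * ι R y) := by rw [ι_mul_ι_eq_neg x z, neg_neg, mul_assoc]

variable (R M) in
/-- The subalgebra of the exterior algebra generated by the products of two vectors. It is
commutative, so the theory of determinants over commutative rings applies to it. -/
def bivectorSubalgebra : Subalgebra R (ExteriorAlgebra R M) :=
  Algebra.adjoin R (Set.range fun p : M × M => ι R p.1 * ι R p.2)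

instance : IsMulCommutative (bivectorSubalgebra R M) := by
  apply Algebra.isMulCommutative_adjoin
  rintro _ ⟨p, rfl⟩ _ ⟨q, rfl⟩
  exact (commute_ι_mul_ι_ι p.1 p.2 q.1).mul_right (commute_ι_mul_ι_ι p.1 p.2 q.2)

/-- The outer product of two families of vectors: its entries are the bivectors `x i ∧ y j`. -/
def bivectorMatrix {m n : Type*} (x : m → M) (y : n → M) : Matrix m n (bivectorSubalgebra R M) :=
  Matrix.of fun i j => ⟨ι R (x i) * ι R (y j), Algebra.subset_adjoin ⟨(x i, y j), rfl⟩⟩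

open scoped IsMulCommutative

lemma isFermionicDyad_bivectorMatrix {m n : Type*} (x : m → M) (y : n → M) :
    IsFermionicDyad (bivectorMatrix (R := R) x y) where
  mul_same_row i j q := Subtype.ext <| by
    change ι R (x i) * ι R (y j) * (ι R (x i) * ι R (y q)) = 0
    rw [mul_assoc, ← (commute_ι_mul_ι_ι (R := R) (x i) (y q) (y j)).eq, ← mul_assoc,
      ← mul_assoc, ι_sq_zero, zero_mul, zero_mul]
  mul_swap i p j q := Subtype.ext <| by
    change ι R (x i) * ι R (y j) * (ι R (x p) * ι R (y q))
      = -(ι R (x i) * ι R (y q) * (ι R (x p) * ι R (y j)))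
    rw [mul_assoc, ← (commute_ι_mul_ι_ι (R := R) (x p) (y q) (y j)).eq,
      ι_mul_ι_eq_neg (x p) (y q)]
    simp only [mul_neg, neg_mul, mul_assoc]

end Bivectors

section FermionMatrix

open scoped IsMulCommutative

lemma coe_prod_fin {R A : Type*} [CommRing R] [Ring A] [Algebra R A]
    (S : Subalgebra R A) [IsMulCommutative S] {n : ℕ} (f : Fin n → S) :
    ((∏ i, f i : S) : A) = ((List.finRange n).map fun i => (f i : A)).prod := by
  rw [← List.prod_ofFn, List.ofFn_eq_map, ← S.coe_val, map_list_prod, List.map_map]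
  rfl

variable (k n : ℕ)

/-- The contribution `ψ_s^i ψ̄_s^j` of the flavour `s` to the entries `ω^{ij}` of `Φ`. -/
def fermionMatrix (s : Fin n) : Matrix (Fin k) (Fin k) (bivectorSubalgebra ℝ (V k n)) :=
  bivectorMatrix (fun i => Pi.single (Sum.inl (s, i)) 1) fun j => Pi.single (Sum.inr (s, j)) 1

lemma coe_fermionMatrix_apply (s : Fin n) (i j : Fin k) :
    (fermionMatrix k n s i j : ExteriorAlgebra ℝ (V k n)) = ψ k n s i * ψb k n s j :=
  rfl

lemma coe_sum_fermionMatrix_apply (i j : Fin k) :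
    (((∑ s, fermionMatrix k n s) i j : bivectorSubalgebra ℝ (V k n)) : ExteriorAlgebra ℝ (V k n))
      = ω k n i j := by
  rw [Matrix.sum_apply, AddSubmonoidClass.coe_finsetSum]
  rfl

lemma coe_det_sum_fermionMatrix :
    ((∑ s, fermionMatrix k n s).det : ExteriorAlgebra ℝ (V k n)) = detPhi k n := by
  rw [← Matrix.det_transpose, Matrix.det_apply', AddSubmonoidClass.coe_finsetSum, detPhi]
  refine Finset.sum_congr rfl fun σ _ => ?_
  rw [Subalgebra.coe_mul, coe_prod_fin, Int.cast_smul_eq_zsmul, zsmul_eq_mul]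
  simp only [Matrix.transpose_apply, coe_sum_fermionMatrix_apply]
  rfl

lemma coe_prod_fermionMatrix :
    ((∏ s, ∏ i, fermionMatrix k n s i i : bivectorSubalgebra ℝ (V k n)) :
      ExteriorAlgebra ℝ (V k n)) = T k n := by
  simp only [coe_prod_fin, coe_fermionMatrix_apply]
  rfl

lemma isFermionicDyad_fermionMatrix (s : Fin n) : IsFermionicDyad (fermionMatrix k n s) :=
  isFermionicDyad_bivectorMatrix _ _

lemma detPhi_pow_eq_nsmul :
    detPhi k n ^ n = (∏ r ∈ Finset.range n, (r + 1).ascFactorial k) • T k n := by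
  have h := IsFermionicDyad.det_sum_pow_card (s := Finset.univ) fun s _ =>
    isFermionicDyad_fermionMatrix k n s
  rw [Finset.card_univ, Fintype.card_fin, Fintype.card_fin, ← nsmul_eq_mul] at h
  rw [← coe_det_sum_fermionMatrix, ← coe_prod_fermionMatrix, ← Subalgebra.coe_pow, h]
  rfl

end FermionMatrix

/-- `(det Φ)^n = (∏_{j=N−k}^{N−1} j! / ∏_{j=0}^{k−1} j!) · T`. -/
theorem detPhi_pow (k N n : ℕ) (hk : 1 ≤ k) (hN : k < N) (hn : n = N - k) :
    (detPhi k n) ^ n =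
      ((∏ j ∈ Finset.Ico (N - k) N, (j.factorial : ℝ)) /
        (∏ j ∈ Finset.range k, (j.factorial : ℝ))) • T k n := by
  obtain rfl : N = n + k := by omega
  have hpos : (∏ j ∈ Finset.range k, (j.factorial : ℝ)) ≠ 0 :=
    Finset.prod_ne_zero_iff.2 fun j _ => by positivity
  have hcoeff : ((∏ r ∈ Finset.range n, (r + 1).ascFactorial k : ℕ) : ℝ)
      = (∏ j ∈ Finset.Ico n (n + k), (j.factorial : ℝ)) /
        ∏ j ∈ Finset.range k, (j.factorial : ℝ) := by
    rw [eq_div_iff hpos]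
    exact_mod_cast prod_ascFactorial_mul_prod_factorial n k
  rw [detPhi_pow_eq_nsmul, ← Nat.cast_smul_eq_nsmul ℝ, hcoeff, Nat.add_sub_cancel]
end
end

section
/- Let k, N be natural numbers with 1 ≤ k < N, n := N − k, and assume kn ≥ 4. Then in Λ(V): (tr Φ)^{kn−4} ∧ (tr(Φ²))² = (kn−4)! · k · n · [k·n³ − 2·n²·(k² + 2) + n·(k³ + 10k) − 4k² − 2] · T. (This is the evaluation of the fermion integral P₂ = ∫Dψ (tr Φ)^{kN−k²−4} (tr(Φ²))².) -/
noncomputable section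

/-! For `v ∈ V` and `φ ∈ V*` the operator `v ∧ (φ ⌋ ·)` is a derivation of `Λ(V)`. It acts on
`Λ^top(V)` as the scalar `φ v`, because there `v ∧ x = 0` and hence
`0 = φ ⌋ (v ∧ x) = φ v • x - v ∧ (φ ⌋ x)`. Summing over `s` gives derivations
`D_{ij} = ∑_s ψ_s^i ∧ ∂/∂ψ_s^j` with `D_{ij} ω^{ab} = δ_{aj} ω^{ib}` which act on the top power as
`n δ_{ij}`. Evaluating `∑_{ij} D_{ij} ((tr Φ)^{m+1} (Φ^p)_{ji} F)` in two ways, by the Leibniz rule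
and by the top-degree scalar, yields a loop equation expressing `(tr Φ)^m tr(Φ^{p+1}) F` through
products of traces of lower powers. Three of its instances reduce `(tr Φ)^{kn-4} (tr Φ²)²` to
`(tr Φ)^{kn}`, which is `(kn)! T` since `tr Φ` is a sum of `kn` commuting elements of square zero.
-/

section SumOfSquareZero

variable {A : Type*} [Semiring A]

theorem add_pow_succ_of_mul_self_eq_zero_s3 {x y : A} (h : Commute x y) (hx : x * x = 0)
    (p : ℕ) : (x + y) ^ (p + 1) = y ^ (p + 1) + (p + 1) • (x * y ^ p) := by
  induction p with
  | zero => simp [add_comm]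
  | succ p ih =>
    have hyx : y * (x * y ^ p) = x * y ^ (p + 1) := by
      rw [← mul_assoc, ← h.eq, mul_assoc, ← pow_succ']
    have hxx : x * (x * y ^ p) = 0 := by rw [← mul_assoc, hx, zero_mul]
    rw [pow_succ', ih, add_mul, mul_add, mul_add, mul_smul_comm, mul_smul_comm, hyx, hxx,
      smul_zero, add_zero, ← pow_succ', succ_nsmul _ (p + 1)]
    abel

theorem list_sum_pow_length_succ_eq_zero {l : List A} (hcomm : l.Pairwise Commute)
    (hsq : ∀ x ∈ l, x * x = 0) : l.sum ^ (l.length + 1) = 0 := by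
  induction l with
  | nil => simp
  | cons x l ih =>
    rw [List.pairwise_cons] at hcomm
    rw [List.forall_mem_cons] at hsq
    have hx : x ^ 2 = 0 := by rw [sq, hsq.1]
    rw [List.sum_cons, List.length_cons]
    exact (Commute.list_sum_right x l hcomm.1).add_pow_eq_zero_of_add_le_succ_of_pow_eq_zero
      hx (ih hcomm.2 hsq.2) (by lia)

theorem list_sum_pow_length {l : List A} (hcomm : l.Pairwise Commute)
    (hsq : ∀ x ∈ l, x * x = 0) : l.sum ^ l.length = l.length.factorial • l.prod := by
  induction l with
  | nil => simp
  | cons x l ih =>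
    rw [List.pairwise_cons] at hcomm
    rw [List.forall_mem_cons] at hsq
    rw [List.sum_cons, List.length_cons, List.prod_cons,
      add_pow_succ_of_mul_self_eq_zero_s3 (Commute.list_sum_right x l hcomm.1) hsq.1,
      list_sum_pow_length_succ_eq_zero hcomm.2 hsq.2, ih hcomm.2 hsq.2, zero_add, mul_smul_comm,
      smul_smul, Nat.factorial_succ]

end SumOfSquareZero

section MatrixPowers

variable {A κ : Type*} [Semiring A] [Fintype κ] [DecidableEq κ] {Φ : Matrix κ κ A}

theorem commute_matrix_pow_apply {x : A} (h : ∀ a b, Commute x (Φ a b)) (p : ℕ) (a b : κ) :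
    Commute x ((Φ ^ p) a b) := by
  induction p generalizing a b with
  | zero =>
    rw [pow_zero, Matrix.one_apply]
    split_ifs
    exacts [Commute.one_right x, Commute.zero_right x]
  | succ p ih =>
    rw [pow_succ, Matrix.mul_apply]
    exact Commute.sum_right _ _ _ fun c _ ↦ (ih a c).mul_right (h c b)

theorem matrix_pow_apply_mem_graded {ι S : Type*} [AddMonoid ι] [SetLike S A]
    [AddSubmonoidClass S A] {𝒜 : ι → S} [SetLike.GradedMonoid 𝒜] {d : ι}
    (h : ∀ a b, Φ a b ∈ 𝒜 d) (p : ℕ) (a b : κ) : (Φ ^ p) a b ∈ 𝒜 (p • d) := by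
  induction p generalizing a b with
  | zero =>
    rw [pow_zero, zero_smul, Matrix.one_apply]
    split_ifs
    exacts [SetLike.one_mem_graded 𝒜, zero_mem _]
  | succ p ih =>
    rw [pow_succ, Matrix.mul_apply, succ_nsmul]
    exact sum_mem fun c _ ↦ SetLike.mul_mem_graded (ih a c) (h c b)

theorem matrix_trace_pow_mem_graded {ι S : Type*} [AddMonoid ι] [SetLike S A]
    [AddSubmonoidClass S A] {𝒜 : ι → S} [SetLike.GradedMonoid 𝒜] {d : ι}
    (h : ∀ a b, Φ a b ∈ 𝒜 d) (p : ℕ) : (Φ ^ p).trace ∈ 𝒜 (p • d) :=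
  sum_mem fun a _ ↦ matrix_pow_apply_mem_graded h p a a

end MatrixPowers

section Leibniz

/-- The operators on a possibly noncommutative algebra that satisfy the Leibniz rule; Mathlib's
`Derivation` requires a commutative algebra. -/
def IsLeibniz {R A : Type*} [CommSemiring R] [Ring A] [Algebra R A] (D : Module.End R A) : Prop :=
  ∀ x y, D (x * y) = D x * y + x * D y

namespace IsLeibniz

variable {R A : Type*} [CommSemiring R] [Ring A] [Algebra R A] {D : Module.End R A}

theorem apply_one (hD : IsLeibniz D) : D 1 = 0 := by
  simpa using hD 1 1

theorem apply_pow_succ (hD : IsLeibniz D) {x : A} (hx : Commute x (D x)) (m : ℕ) :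
    D (x ^ (m + 1)) = (m + 1) • (x ^ m * D x) := by
  induction m with
  | zero => simp
  | succ m ih =>
    rw [pow_succ, hD, ih, smul_mul_assoc, mul_assoc, ← hx.eq, ← mul_assoc, ← pow_succ,
      succ_nsmul _ (m + 1)]

theorem sum {σ : Type*} {s : Finset σ} {E : σ → Module.End R A}
    (hE : ∀ i ∈ s, IsLeibniz (E i)) : IsLeibniz (∑ i ∈ s, E i) := fun x y ↦ by
  simp only [LinearMap.sum_apply, Finset.sum_mul, Finset.mul_sum, ← Finset.sum_add_distrib]
  exact Finset.sum_congr rfl fun i hi ↦ hE i hi x y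

end IsLeibniz

end Leibniz

section LoopEquation

/-- Derivations `D i j` that move row `j` of the matrix `Φ` to row `i` and kill its other rows: the
polarization operators of invariant theory, through which `gl_κ` acts on the row index of `Φ`. -/
structure IsPolarization {R A κ : Type*} [CommSemiring R] [Ring A] [Algebra R A] [DecidableEq κ]
    (D : κ → κ → Module.End R A) (Φ : Matrix κ κ A) : Prop where
  isLeibniz : ∀ i j, IsLeibniz (D i j)
  apply_entry : ∀ i j a b, D i j (Φ a b) = if a = j then Φ i b else 0

namespace IsPolarization

variable {R A κ : Type*} [CommSemiring R] [Ring A] [Algebra R A] [Fintype κ] [DecidableEq κ]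
  {D : κ → κ → Module.End R A} {Φ : Matrix κ κ A}

theorem apply_trace (h : IsPolarization D Φ) (i j : κ) : D i j Φ.trace = Φ i j := by
  simp [Matrix.trace, h.apply_entry]

theorem apply_pow_entry (h : IsPolarization D Φ) (i j : κ) (p : ℕ) (a b : κ) :
    D i j ((Φ ^ p) a b) = ∑ q ∈ Finset.range p, (Φ ^ q) a j * (Φ ^ (p - q)) i b := by
  induction p generalizing b with
  | zero =>
    rw [pow_zero, Matrix.one_apply]
    split_ifs <;> simp [(h.isLeibniz i j).apply_one]
  | succ p ih =>
    have hlow : ∀ q ∈ Finset.range p, ∑ c, (Φ ^ q) a j * (Φ ^ (p - q)) i c * Φ c b =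
        (Φ ^ q) a j * (Φ ^ (p + 1 - q)) i b := fun q hq ↦ by
      rw [Nat.succ_sub (Finset.mem_range.mp hq).le, pow_succ, Matrix.mul_apply, Finset.mul_sum]
      simp only [mul_assoc]
    rw [pow_succ, Matrix.mul_apply, map_sum, Finset.sum_range_succ, ← Finset.sum_congr rfl hlow,
      Finset.sum_comm]
    simp [h.isLeibniz i j _ _, ih, h.apply_entry, Finset.sum_mul, Finset.sum_add_distrib]

theorem sum_apply_pow_entry (h : IsPolarization D Φ) (p : ℕ) :
    ∑ i, ∑ j, D i j ((Φ ^ p) j i) =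
      ∑ q ∈ Finset.range p, (Φ ^ q).trace * (Φ ^ (p - q)).trace := by
  simp only [h.apply_pow_entry, Matrix.trace, Matrix.diag_apply, Finset.sum_mul_sum]
  rw [Finset.sum_comm, Finset.sum_comm (s := Finset.range p)]
  exact Finset.sum_congr rfl fun _ _ ↦ Finset.sum_comm

theorem apply_trace_pow (h : IsPolarization D Φ) (hΦ : ∀ a b c d, Commute (Φ a b) (Φ c d))
    (i j : κ) (p : ℕ) : D i j (Φ ^ p).trace = p • (Φ ^ p) i j := by
  have hcomm (q r : ℕ) (a b c d : κ) : Commute ((Φ ^ q) a b) ((Φ ^ r) c d) :=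
    commute_matrix_pow_apply
      (fun c d ↦ (commute_matrix_pow_apply (fun a b ↦ hΦ c d a b) q a b).symm) r c d
  have hterm : ∀ q ∈ Finset.range p,
      ∑ a, (Φ ^ q) a j * (Φ ^ (p - q)) i a = (Φ ^ p) i j := fun q hq ↦ by
    simp only [(hcomm q (p - q) _ _ _ _).eq, ← Matrix.mul_apply, ← pow_add,
      Nat.sub_add_cancel (Finset.mem_range.mp hq).le]
  simp only [Matrix.trace, Matrix.diag_apply, map_sum, h.apply_pow_entry]
  rw [Finset.sum_comm, Finset.sum_congr rfl hterm, Finset.sum_const, Finset.card_range]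

theorem apply_trace_pow_mul (h : IsPolarization D Φ) (hΦ : ∀ a b c d, Commute (Φ a b) (Φ c d))
    (i j : κ) (m : ℕ) (y : A) :
    D i j (Φ.trace ^ (m + 1) * y) =
      (m + 1) • (Φ.trace ^ m * (Φ i j * y)) + Φ.trace ^ (m + 1) * D i j y := by
  have hcomm : Commute Φ.trace (D i j Φ.trace) := by
    rw [h.apply_trace]
    exact Commute.sum_left _ _ _ fun a _ ↦ hΦ a a i j
  rw [h.isLeibniz i j, (h.isLeibniz i j).apply_pow_succ hcomm, h.apply_trace, smul_mul_assoc,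
    mul_assoc]

theorem loop_equation (h : IsPolarization D Φ) (hΦ : ∀ a b c d, Commute (Φ a b) (Φ c d)) {r : R}
    {m p : ℕ} {F : A}
    (hr : ∀ i j, D i j (Φ.trace ^ (m + 1) * ((Φ ^ p) j i * F)) =
      (if i = j then r else 0) • (Φ.trace ^ (m + 1) * ((Φ ^ p) j i * F))) :
    (m + 1) • (Φ.trace ^ m * ((Φ ^ (p + 1)).trace * F)) =
      Φ.trace ^ (m + 1) * (r • ((Φ ^ p).trace * F) -
        (∑ q ∈ Finset.range p, (Φ ^ q).trace * (Φ ^ (p - q)).trace) * F -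
        ∑ i, ∑ j, (Φ ^ p) j i * D i j F) := by
  have hscalar : ∑ i, ∑ j, D i j (Φ.trace ^ (m + 1) * ((Φ ^ p) j i * F)) =
      Φ.trace ^ (m + 1) * r • ((Φ ^ p).trace * F) := by
    simp only [hr, ite_smul, zero_smul, Finset.sum_ite_eq, Finset.mem_univ, if_true]
    simp only [Matrix.trace, Matrix.diag_apply, Finset.sum_mul, ← Finset.smul_sum,
      ← Finset.mul_sum, mul_smul_comm]
  have hleibniz : ∑ i, ∑ j, D i j (Φ.trace ^ (m + 1) * ((Φ ^ p) j i * F)) =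
      (m + 1) • (Φ.trace ^ m * ((Φ ^ (p + 1)).trace * F)) + Φ.trace ^ (m + 1) *
        ((∑ i, ∑ j, D i j ((Φ ^ p) j i)) * F + ∑ i, ∑ j, (Φ ^ p) j i * D i j F) := by
    have htrace : (Φ ^ (p + 1)).trace * F = ∑ i, ∑ j, Φ i j * ((Φ ^ p) j i * F) := by
      simp only [pow_succ' Φ p, Matrix.trace, Matrix.diag_apply, Matrix.mul_apply, Finset.sum_mul,
        mul_assoc]
    simp only [htrace, h.apply_trace_pow_mul hΦ, h.isLeibniz _ _ ((Φ ^ p) _ _) F, Finset.sum_mul,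
      Finset.sum_add_distrib, ← Finset.smul_sum, ← Finset.mul_sum]
  rw [sub_sub, mul_sub, ← h.sum_apply_pow_entry, ← hscalar, hleibniz, add_sub_cancel_right]

theorem sum_pow_entry_mul_apply_trace_pow (h : IsPolarization D Φ)
    (hΦ : ∀ a b c d, Commute (Φ a b) (Φ c d)) (p q : ℕ) :
    ∑ i, ∑ j, (Φ ^ p) j i * D i j (Φ ^ q).trace = q • (Φ ^ (p + q)).trace := by
  rw [Finset.sum_comm]
  simp only [h.apply_trace_pow hΦ, mul_smul_comm, ← Finset.smul_sum, ← Matrix.mul_apply,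
    ← pow_add]
  rfl

end IsPolarization

end LoopEquation

section ExteriorAlgebra

open ExteriorAlgebra

variable {R M : Type*} [CommRing R] [AddCommGroup M] [Module R M]

theorem ι_mul_ι_swap (u v : M) : ι R u * ι R v = -(ι R v * ι R u) :=
  eq_neg_of_add_eq_zero_left (ι_add_mul_swap u v)

theorem ι_mul_ι_commute (u v : M) (x : ExteriorAlgebra R M) : Commute (ι R u * ι R v) x := by
  induction x using ExteriorAlgebra.induction with
  | algebraMap r => exact (Algebra.commutes r _).symm
  | ι w =>
    calc ι R u * ι R v * ι R w = ι R w * ι R u * ι R v := by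
          rw [mul_assoc, ι_mul_ι_swap v w, mul_neg, ← mul_assoc, ι_mul_ι_swap u w, neg_mul, neg_neg]
      _ = ι R w * (ι R u * ι R v) := mul_assoc _ _ _
  | mul x y hx hy => exact hx.mul_right hy
  | add x y hx hy => exact hx.add_right hy

theorem ι_mul_ι_mul_self (u v : M) : ι R u * ι R v * (ι R u * ι R v) = 0 := by
  rw [← mul_assoc, (ι_mul_ι_commute u v (ι R u)).eq, ← mul_assoc, ι_sq_zero, zero_mul, zero_mul]

theorem exteriorPower_eq_bot_of_finrank_lt [Nontrivial R] [Module.Free R M] [Module.Finite R M]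
    {d : ℕ} (hd : Module.finrank R M < d) : ⋀[R]^d M = ⊥ := by
  rw [← Submodule.subsingleton_iff_eq_bot, ← Module.finrank_eq_zero_iff_of_free R,
    exteriorPower.finrank_eq, Nat.choose_eq_zero_of_lt hd]

theorem ι_mem_exteriorPower_one (v : M) : ι R v ∈ ⋀[R]^1 M := by
  rw [exteriorPower, pow_one]
  exact LinearMap.mem_range_self _ _

/-- The operator `x ↦ v ∧ (φ ⌋ x)`: the derivation of the exterior algebra extending the rank-one
endomorphism `u ↦ φ u • v`. -/
def rankOneDerivation (φ : Module.Dual R M) (v : M) : Module.End R (ExteriorAlgebra R M) :=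
  LinearMap.mulLeft R (ι R v) ∘ₗ CliffordAlgebra.contractLeft φ

theorem rankOneDerivation_apply (φ : Module.Dual R M) (v : M) (x : ExteriorAlgebra R M) :
    rankOneDerivation φ v x = ι R v * CliffordAlgebra.contractLeft φ x :=
  rfl

theorem exteriorAlgebra_contractLeft_ι_mul (φ : Module.Dual R M) (u : M) (x : ExteriorAlgebra R M) :
    CliffordAlgebra.contractLeft φ (ι R u * x) =
      φ u • x - ι R u * CliffordAlgebra.contractLeft φ x :=
  CliffordAlgebra.contractLeft_ι_mul _ _ _

theorem rankOneDerivation_ι (φ : Module.Dual R M) (u v : M) :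
    rankOneDerivation φ v (ι R u) = φ u • ι R v := by
  rw [rankOneDerivation_apply, ExteriorAlgebra.ι, CliffordAlgebra.contractLeft_ι,
    ← Algebra.commutes, ← Algebra.smul_def]

theorem isLeibniz_rankOneDerivation (φ : Module.Dual R M) (v : M) :
    IsLeibniz (rankOneDerivation φ v) := fun x y ↦ by
  induction x using ExteriorAlgebra.induction generalizing y with
  | algebraMap r => simp [rankOneDerivation_apply, ← Algebra.smul_def, ExteriorAlgebra]
  | ι u =>
    rw [rankOneDerivation_ι]
    simp only [rankOneDerivation_apply, exteriorAlgebra_contractLeft_ι_mul, mul_sub, smul_mul_assoc,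
      mul_smul_comm, ← mul_assoc]
    rw [ι_mul_ι_swap v u, neg_mul, sub_neg_eq_add]
  | mul x x' hx hx' => rw [mul_assoc, hx, hx', hx x']; noncomm_ring
  | add x x' hx hx' => rw [add_mul, map_add, hx, hx', map_add, add_mul, add_mul]; abel

theorem rankOneDerivation_apply_of_ι_mul_eq_zero (φ : Module.Dual R M) {v : M}
    {x : ExteriorAlgebra R M} (hx : ι R v * x = 0) : rankOneDerivation φ v x = φ v • x := by
  have h := exteriorAlgebra_contractLeft_ι_mul φ v x
  rw [hx, map_zero] at h
  exact (sub_eq_zero.mp h.symm).symm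

theorem ι_mul_eq_zero_of_finrank_le [Nontrivial R] [Module.Free R M] [Module.Finite R M]
    {d : ℕ} (hd : Module.finrank R M ≤ d) (v : M) {x : ExteriorAlgebra R M} (hx : x ∈ ⋀[R]^d M) :
    ι R v * x = 0 := by
  have hmem : ι R v * x ∈ ⋀[R]^(1 + d) M :=
    SetLike.mul_mem_graded (A := fun i ↦ ⋀[R]^i M) (ι_mem_exteriorPower_one v) hx
  rwa [exteriorPower_eq_bot_of_finrank_lt (by lia), Submodule.mem_bot] at hmem

end ExteriorAlgebra
section FermionMatrix

variable (k n : ℕ)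

/-- The matrix `Φ = (ω^{ij})`. -/
def Phi : Matrix (Fin k) (Fin k) (ExteriorAlgebra ℝ (V k n)) :=
  Matrix.of (ω k n)

theorem trPhi_eq_trace : trPhi k n = (Phi k n).trace :=
  rfl

theorem trPhi2_eq_trace_sq : trPhi2 k n = (Phi k n ^ 2).trace := by
  simp only [sq, Matrix.trace, Matrix.diag_apply, Matrix.mul_apply]
  rfl

theorem ω_commute (i j : Fin k) (x : ExteriorAlgebra ℝ (V k n)) : Commute (ω k n i j) x :=
  Commute.sum_left _ _ _ fun _ _ ↦ ι_mul_ι_commute _ _ x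

theorem Phi_apply_mem (i j : Fin k) : Phi k n i j ∈ ⋀[ℝ]^2 (V k n) := by
  change ∑ s, ψ k n s i * ψb k n s j ∈ ⋀[ℝ]^(1 + 1) (V k n)
  exact Submodule.sum_mem _ fun _ _ ↦ SetLike.mul_mem_graded (A := fun e ↦ ⋀[ℝ]^e (V k n))
    (ι_mem_exteriorPower_one _) (ι_mem_exteriorPower_one _)

theorem trPhi_pow_top : trPhi k n ^ (k * n) = ((k * n).factorial : ℝ) • T k n := by
  let pairs : List (ExteriorAlgebra ℝ (V k n)) :=
    (List.finRange n).flatMap fun s ↦ (List.finRange k).map fun j ↦ ψ k n s j * ψb k n s j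
  have hpairs : ∀ x ∈ pairs, ∃ s j, ψ k n s j * ψb k n s j = x := by simp [pairs]
  have hlength : pairs.length = k * n := by simp [pairs, mul_comm]
  have hprod : pairs.prod = T k n := by
    simp [pairs, T, List.flatMap, List.prod_flatten, Function.comp_def]
  have hsum : pairs.sum = trPhi k n := by
    simp only [pairs, List.flatMap, List.sum_flatten, List.map_map, Function.comp_def, trPhi, ω]
    rw [Finset.sum_comm]
    simp only [← List.sum_ofFn, List.ofFn_eq_map]
  have hcomm : pairs.Pairwise Commute := List.pairwise_of_forall_mem_list fun x hx y _ ↦ by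
    obtain ⟨s, j, rfl⟩ := hpairs x hx
    exact ι_mul_ι_commute _ _ y
  have hsq : ∀ x ∈ pairs, x * x = 0 := fun x hx ↦ by
    obtain ⟨s, j, rfl⟩ := hpairs x hx
    exact ι_mul_ι_mul_self _ _
  rw [Nat.cast_smul_eq_nsmul, ← hsum, ← hprod, ← hlength]
  exact list_sum_pow_length hcomm hsq

/-- The polarization operator `∑_s ψ_s^i ∧ ∂/∂ψ_s^j`. -/
def psiPolarization (i j : Fin k) : Module.End ℝ (ExteriorAlgebra ℝ (V k n)) :=
  ∑ s, rankOneDerivation (LinearMap.proj (Sum.inl (s, j))) (Pi.single (Sum.inl (s, i)) 1)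

theorem isLeibniz_psiPolarization (i j : Fin k) : IsLeibniz (psiPolarization k n i j) :=
  IsLeibniz.sum fun _ _ ↦ isLeibniz_rankOneDerivation _ _

theorem psiPolarization_ψ (i j a : Fin k) (s : Fin n) :
    psiPolarization k n i j (ψ k n s a) = if a = j then ψ k n s i else 0 := by
  simp [psiPolarization, ψ, rankOneDerivation_ι, Pi.single_apply, ite_and, eq_comm (a := j)]

theorem psiPolarization_ψb (i j a : Fin k) (s : Fin n) :
    psiPolarization k n i j (ψb k n s a) = 0 := by
  simp [psiPolarization, ψb, rankOneDerivation_ι]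

theorem isPolarization_psiPolarization : IsPolarization (psiPolarization k n) (Phi k n) where
  isLeibniz := isLeibniz_psiPolarization k n
  apply_entry i j a b := by
    simp only [Phi, Matrix.of_apply, ω, map_sum, isLeibniz_psiPolarization k n i j _ _,
      psiPolarization_ψ, psiPolarization_ψb, mul_zero, add_zero, ite_mul, zero_mul]
    split_ifs <;> simp

theorem psiPolarization_apply_of_mem_top (i j : Fin k) {x : ExteriorAlgebra ℝ (V k n)}
    (hx : x ∈ ⋀[ℝ]^(2 * (k * n)) (V k n)) :
    psiPolarization k n i j x = (if i = j then (n : ℝ) else 0) • x := by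
  have hrank : Module.finrank ℝ (V k n) ≤ 2 * (k * n) := by
    simp [two_mul, mul_comm n k]
  simp only [psiPolarization, LinearMap.sum_apply, rankOneDerivation_apply_of_ι_mul_eq_zero _
    (ι_mul_eq_zero_of_finrank_le hrank _ hx), ← Finset.sum_smul]
  congr 1
  split_ifs with h <;> simp [h]

variable {k n}

theorem fermion_loop_equation {m p d : ℕ} (hd : m + 1 + p + d = k * n)
    {F : ExteriorAlgebra ℝ (V k n)} (hF : F ∈ ⋀[ℝ]^(2 * d) (V k n)) :
    ((m : ℝ) + 1) • (trPhi k n ^ m * ((Phi k n ^ (p + 1)).trace * F)) =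
      trPhi k n ^ (m + 1) * ((n : ℝ) • ((Phi k n ^ p).trace * F) -
        (∑ q ∈ Finset.range p, (Phi k n ^ q).trace * (Phi k n ^ (p - q)).trace) * F -
        ∑ i, ∑ j, (Phi k n ^ p) j i * psiPolarization k n i j F) := by
  have htrace : trPhi k n ∈ ⋀[ℝ]^2 (V k n) :=
    Submodule.sum_mem _ fun a _ ↦ Phi_apply_mem k n a a
  have hpow (i j : Fin k) : (Phi k n ^ p) j i ∈ ⋀[ℝ]^(p • 2) (V k n) :=
    matrix_pow_apply_mem_graded (𝒜 := fun e ↦ ⋀[ℝ]^e (V k n)) (Phi_apply_mem k n) p j i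
  have htop (i j : Fin k) :
      trPhi k n ^ (m + 1) * ((Phi k n ^ p) j i * F) ∈ ⋀[ℝ]^(2 * (k * n)) (V k n) := by
    have hdeg : 2 * (k * n) = (m + 1) • 2 + (p • 2 + 2 * d) := by
      simp only [smul_eq_mul]
      lia
    rw [hdeg]
    exact SetLike.mul_mem_graded (SetLike.pow_mem_graded _ htrace)
      (SetLike.mul_mem_graded (hpow i j) hF)
  have h := (isPolarization_psiPolarization k n).loop_equation
    (fun a b c d ↦ ω_commute k n a b (ω k n c d))
    fun i j ↦ psiPolarization_apply_of_mem_top k n i j (htop i j)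
  rwa [← Nat.cast_smul_eq_nsmul ℝ, Nat.cast_succ] at h

theorem fermion_loop_equation_one {m p : ℕ} (hm : m + 1 + p = k * n) :
    ((m : ℝ) + 1) • (trPhi k n ^ m * (Phi k n ^ (p + 1)).trace) =
      trPhi k n ^ (m + 1) * ((n : ℝ) • (Phi k n ^ p).trace -
        ∑ q ∈ Finset.range p, (Phi k n ^ q).trace * (Phi k n ^ (p - q)).trace) := by
  have hone : (1 : ExteriorAlgebra ℝ (V k n)) ∈ ⋀[ℝ]^(2 * 0) (V k n) :=
    SetLike.one_mem_graded fun e ↦ ⋀[ℝ]^e (V k n)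
  simpa only [(isLeibniz_psiPolarization k n _ _).apply_one, mul_one, mul_zero,
    Finset.sum_const_zero, sub_zero] using fermion_loop_equation hm hone

theorem fermion_loop_equation_trace_pow {m p q : ℕ} (hm : m + 1 + p + q = k * n) :
    ((m : ℝ) + 1) • (trPhi k n ^ m * ((Phi k n ^ (p + 1)).trace * (Phi k n ^ q).trace)) =
      trPhi k n ^ (m + 1) * ((n : ℝ) • ((Phi k n ^ p).trace * (Phi k n ^ q).trace) -
        (∑ l ∈ Finset.range p, (Phi k n ^ l).trace * (Phi k n ^ (p - l)).trace) *
          (Phi k n ^ q).trace - q • (Phi k n ^ (p + q)).trace) := by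
  have htrace : (Phi k n ^ q).trace ∈ ⋀[ℝ]^(2 * q) (V k n) := by
    rw [mul_comm]
    exact matrix_trace_pow_mem_graded (𝒜 := fun e ↦ ⋀[ℝ]^e (V k n)) (Phi_apply_mem k n) q
  rw [← (isPolarization_psiPolarization k n).sum_pow_entry_mul_apply_trace_pow
    (fun a b c d ↦ ω_commute k n a b (ω k n c d))]
  exact fermion_loop_equation hm htrace

theorem trPhi_pow_mul_trace_Phi_sq {m : ℕ} (hm : m + 2 = k * n) :
    trPhi k n ^ m * (Phi k n ^ 2).trace =
      ((m.factorial : ℝ) * (k * n) * (n - k)) • T k n := by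
  have hkn : (k : ℝ) * n = m + 2 := mod_cast hm.symm
  refine smul_right_injective _ (Nat.cast_add_one_ne_zero m : (m : ℝ) + 1 ≠ 0) ?_
  calc ((m : ℝ) + 1) • (trPhi k n ^ m * (Phi k n ^ 2).trace)
      = trPhi k n ^ (m + 1) * ((n : ℝ) • trPhi k n - (k : ℝ) • trPhi k n) := by
        simpa [← trPhi_eq_trace, ← Nat.cast_smul_eq_nsmul ℝ, ← nsmul_eq_mul]
          using fermion_loop_equation_one (p := 1) hm
    _ = ((n : ℝ) - k) • trPhi k n ^ (k * n) := by
        rw [← sub_smul, mul_smul_comm, ← pow_succ, hm]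
    _ = ((m : ℝ) + 1) • ((m.factorial : ℝ) * (k * n) * (n - k)) • T k n := by
        rw [trPhi_pow_top, ← hm, Nat.factorial_succ, Nat.factorial_succ, hkn]
        push_cast
        module

theorem trPhi_pow_mul_trace_Phi_cube {m : ℕ} (hm : m + 3 = k * n) :
    trPhi k n ^ m * (Phi k n ^ 3).trace =
      ((m.factorial : ℝ) * (k * n) * ((n - k) ^ 2 - k * n + 1)) • T k n := by
  have hkn : (k : ℝ) * n = m + 3 := mod_cast hm.symm
  refine smul_right_injective _ (Nat.cast_add_one_ne_zero m : (m : ℝ) + 1 ≠ 0) ?_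
  calc ((m : ℝ) + 1) • (trPhi k n ^ m * (Phi k n ^ 3).trace)
      = trPhi k n ^ (m + 1) * ((n : ℝ) • (Phi k n ^ 2).trace -
          ((k : ℝ) • (Phi k n ^ 2).trace + trPhi k n * trPhi k n)) := by
        simpa [Finset.sum_range_succ, ← trPhi_eq_trace, ← Nat.cast_smul_eq_nsmul ℝ,
          ← nsmul_eq_mul] using fermion_loop_equation_one (p := 2) hm
    _ = ((n : ℝ) - k) • (trPhi k n ^ (m + 1) * (Phi k n ^ 2).trace) - trPhi k n ^ (k * n) := by
        rw [← sub_sub, ← sub_smul, mul_sub, mul_smul_comm, ← mul_assoc, ← pow_succ, ← pow_succ, hm]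
    _ = ((m : ℝ) + 1) •
          ((m.factorial : ℝ) * (k * n) * ((n - k) ^ 2 - k * n + 1)) • T k n := by
        rw [trPhi_pow_mul_trace_Phi_sq hm, trPhi_pow_top, ← hm, hkn]
        simp only [Nat.factorial_succ]
        push_cast
        module

theorem trPhi_pow_mul_trace_Phi_sq_sq {m : ℕ} (hm : m + 4 = k * n) :
    trPhi k n ^ m * (Phi k n ^ 2).trace ^ 2 =
      ((m.factorial : ℝ) * (k * n) *
        ((k * n - 2) * (n - k) ^ 2 - 2 * ((n - k) ^ 2 - k * n + 1))) • T k n := by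
  have hkn : (k : ℝ) * n = m + 4 := mod_cast hm.symm
  refine smul_right_injective _ (Nat.cast_add_one_ne_zero m : (m : ℝ) + 1 ≠ 0) ?_
  calc ((m : ℝ) + 1) • (trPhi k n ^ m * (Phi k n ^ 2).trace ^ 2)
      = trPhi k n ^ (m + 1) * ((n : ℝ) • (trPhi k n * (Phi k n ^ 2).trace) -
          (k : ℝ) • (trPhi k n * (Phi k n ^ 2).trace) - (2 : ℝ) • (Phi k n ^ 3).trace) := by
        simpa [sq (Matrix.trace _), ← trPhi_eq_trace, ← Nat.cast_smul_eq_nsmul ℝ, ← nsmul_eq_mul,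
          mul_assoc] using fermion_loop_equation_trace_pow (p := 1) (q := 2) hm
    _ = ((n : ℝ) - k) • (trPhi k n ^ (m + 2) * (Phi k n ^ 2).trace) -
          (2 : ℝ) • (trPhi k n ^ (m + 1) * (Phi k n ^ 3).trace) := by
        rw [← sub_smul, mul_sub, mul_smul_comm, mul_smul_comm, ← mul_assoc, ← pow_succ]
    _ = ((m : ℝ) + 1) • ((m.factorial : ℝ) * (k * n) *
          ((k * n - 2) * (n - k) ^ 2 - 2 * ((n - k) ^ 2 - k * n + 1))) • T k n := by
        rw [trPhi_pow_mul_trace_Phi_sq hm, trPhi_pow_mul_trace_Phi_cube hm, hkn]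
        simp only [Nat.factorial_succ]
        push_cast
        module

end FermionMatrix

/-- `(tr Φ)^{kn−4} ∧ (tr(Φ²))²
  = (kn−4)! · k · n · [k n³ − 2 n² (k²+2) + n (k³+10k) − 4k² − 2] · T`
(the fermion integral `P₂`). -/
theorem P2_eval (k N n : ℕ) (hk : 1 ≤ k) (hN : k < N) (hn : n = N - k)
    (hkn : 4 ≤ k * n) :
    (trPhi k n) ^ (k * n - 4) * (trPhi2 k n) ^ 2 =
      (((k * n - 4).factorial : ℝ) * (k : ℝ) * (n : ℝ) *
        ((k : ℝ) * (n : ℝ) ^ 3 - 2 * (n : ℝ) ^ 2 * ((k : ℝ) ^ 2 + 2)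
          + (n : ℝ) * ((k : ℝ) ^ 3 + 10 * (k : ℝ)) - 4 * (k : ℝ) ^ 2 - 2)) •
        T k n := by
  rw [trPhi2_eq_trace_sq, trPhi_pow_mul_trace_Phi_sq_sq (Nat.sub_add_cancel hkn)]
  congr 1
  ring
end
end
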